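/- arXiv:2605.19063 — 2 statements merged into one kernel-verified Lean document; each statement's English description precedes it below -/
import Mathlib

section
/- For every fixed k ≥ 1, each coefficient of the q,t-Narayana polynomial N_{m,k}(q,t) is nondecreasing in m; equivalently, for all m ≥ k+1 and all natural numbers u, v, the number of parallelogram polyominoes P ∈ PP(m−k, k) with area(P) = u and bounce(P) = v is at most the number of P ∈ PP(m−k+1, k) with area(P) = u and bounce(P) = v, so that the incremental polynomial N_{m,k}(q,t) − N_{m−1,k}(q,t) has nonnegative coefficients. -/
namespace QtN

/-! ### Lattice paths and parallelogram polyominoes -/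

/-- A step of a lattice path: east or north. -/
inductive Step : Type
  | E : Step
  | N : Step
  deriving DecidableEq, Repr

/-- Number of east steps of a path. -/
def countE (w : List Step) : ℕ := w.count Step.E

/-- Number of north steps of a path. -/
def countN (w : List Step) : ℕ := w.count Step.N

/-- Endpoint of a path started at the origin. -/
def pathPos (w : List Step) : ℕ × ℕ := (countE w, countN w)

/-- The set of lattice points visited by a path started at the origin. -/
def pathPts (w : List Step) : Finset (ℕ × ℕ) :=
  ((List.range (w.length + 1)).map (fun i => pathPos (w.take i))).toFinset

/-- `colHeightsAux w h`: for each east step of `w` (in order), the number of north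
steps preceding it, starting with `h` north steps already performed. -/
def colHeightsAux : List Step → ℕ → List ℕ
  | [], _ => []
  | Step.E :: r, h => h :: colHeightsAux r h
  | Step.N :: r, h => colHeightsAux r (h + 1)

/-- Height at which the path `w` crosses the vertical strip `i ≤ x ≤ i + 1`. -/
def colHeight (w : List Step) (i : ℕ) : ℕ := (colHeightsAux w 0).getD i 0

/-- A parallelogram polyomino of size `m × n`: a pair of monotone lattice paths from
`(0,0)` to `(m,n)` (east/north steps), the upper path staying weakly above the lower
path, and the two paths meeting only at `(0,0)` and `(m,n)`. -/
structure Polyomino (m n : ℕ) : Type where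
  lower : List Step
  upper : List Step
  lowerE : countE lower = m
  lowerN : countN lower = n
  upperE : countE upper = m
  upperN : countN upper = n
  above : ∀ i < m, colHeight lower i ≤ colHeight upper i
  meet : pathPts upper ∩ pathPts lower = {(0, 0), (m, n)}

/-- The area statistic: number of unit squares between the two paths,
minus `(m + n - 1)`. -/
def area {m n : ℕ} (P : Polyomino m n) : ℕ :=
  (∑ i ∈ Finset.range m, (colHeight P.upper i - colHeight P.lower i)) - (m + n - 1)

/-- Where an eastward run at height `y`, starting at `x`, first hits the lower path. -/
def eastTarget (hL : ℕ → ℕ) (m x y : ℕ) : ℕ :=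
  ((List.range m).filter (fun i => decide (x ≤ i ∧ y ≤ hL i))).headD m

/-- Total bounce contribution: from state `(x, y)` just after the `j`-th east-to-north
turn (counting the turns made so far), alternately go north until hitting the upper
path and east until hitting the lower path, each step contributing the number of
east-to-north turns preceding it. -/
def bounceAux (hU hL : ℕ → ℕ) (m n : ℕ) : ℕ → ℕ → ℕ → ℕ → ℕ
  | 0, _, _, _ => 0
  | fuel + 1, x, y, j =>
    if x = m ∧ y = n then 0
    else
      let y' := hU (x - 1)
      let x' := if y' = n then m else eastTarget hL m x y'
      (j + 1) * ((y' - y) + (x' - x)) + bounceAux hU hL m n fuel x' y' (j + 1)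

/-- The bounce statistic of a parallelogram polyomino: the bounce path starts with a
single east step (contributing `0`) and then alternates north runs (to the ceiling)
and east runs (to the floor); each step contributes the number of east-to-north turns
preceding it; finally `(m + n - 1)` is subtracted. -/
def bounce {m n : ℕ} (P : Polyomino m n) : ℕ :=
  bounceAux (colHeight P.upper) (colHeight P.lower) m n (m + n + 2) 1 0 0 - (m + n - 1)

/-! ### Set partitions and noncrossing partitions -/

/-- Maximum of a finite set of naturals (`0` for the empty set). -/
def fmax (β : Finset ℕ) : ℕ := β.sup id

/-- Minimum of a finite set of naturals (`0` for the empty set). -/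
def fmin (β : Finset ℕ) : ℕ := if h : β.Nonempty then β.min' h else 0

/-- A set partition of `{1, …, n}`, given by its finite set of blocks. -/
structure SetPartition (n : ℕ) : Type where
  blocks : Finset (Finset ℕ)
  not_empty_mem : ∅ ∉ blocks
  cover : ∀ i : ℕ, i ∈ Finset.Icc 1 n ↔ ∃ β ∈ blocks, i ∈ β
  disjoint : ∀ β ∈ blocks, ∀ γ ∈ blocks, β ≠ γ → Disjoint β γ

/-- A family of blocks is noncrossing if there are no `a < b < c < d` with
`a, c` in one block and `b, d` in a different block. -/
def IsNoncrossing (bs : Finset (Finset ℕ)) : Prop :=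
  ∀ a b c d : ℕ, a < b → b < c → c < d →
    ∀ β ∈ bs, ∀ γ ∈ bs, a ∈ β → c ∈ β → b ∈ γ → d ∈ γ → β = γ

/-- `NC n k`: noncrossing partitions of `{1, …, n}` with exactly `n - k + 1` blocks. -/
abbrev NC (n k : ℕ) : Type :=
  {P : SetPartition n // IsNoncrossing P.blocks ∧ P.blocks.card = n - k + 1}

/-- The skip statistic: `∑_{β} (max β - min β - |β| + 1)`. -/
def skip (bs : Finset (Finset ℕ)) : ℕ :=
  ∑ β ∈ bs, ((fmax β + 1 - fmin β) - β.card)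

/-- The non-singleton blocks of a partition. -/
def nsBlocks (bs : Finset (Finset ℕ)) : Finset (Finset ℕ) :=
  bs.filter (fun β => 2 ≤ β.card)

/-- The block of `bs` containing `x` (junk if there is not exactly one). -/
def blockContaining (bs : Finset (Finset ℕ)) (x : ℕ) : Finset ℕ :=
  (bs.filter (fun β => x ∈ β)).sup id

/-- For a noncrossing partition in `NC n 3`, the quadruple `(a, b, c, d)` describing its
non-singleton blocks: for two pair blocks `{a,b}` and `{c,d}` (with `a` the global
minimum) this is `(a, b, c, d)`; for a single triple block `{a, b, c}` (`a < b < c`)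
this is `(a, b, b, c)`. -/
def blockQuad (bs : Finset (Finset ℕ)) : ℕ × ℕ × ℕ × ℕ :=
  let A := blockContaining (nsBlocks bs) (fmin ((nsBlocks bs).sup id))
  if (nsBlocks bs).card = 1 then
    let l := A.sort (· ≤ ·)
    (l.getD 0 0, l.getD 1 0, l.getD 1 0, l.getD 2 0)
  else
    let B := ((nsBlocks bs).erase A).sup id
    (fmin A, fmax A, fmin B, fmax B)

/-- The leap statistic on `NC n 3`: `leap(ab|cd) = c - 2 + max(0, c - b)`,
and `leap({a,b,c}) = b - 2` (the case `b = c`). -/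
def leap (bs : Finset (Finset ℕ)) : ℕ :=
  let (_, b, c, _) := blockQuad bs
  (c - 2) + (c - b)

/-- The skew statistic on `NC n 3`: `skew(ab|cd) = c - 2 + a` if `b < c`, else `c - 2`;
`skew({a,b,c}) = b - 2` (the case `b = c`). -/
def skew (bs : Finset (Finset ℕ)) : ℕ :=
  let (a, b, c, _) := blockQuad bs
  if b < c then c - 2 + a else c - 2

/-- The mag statistic on `NC n 3`: `mag(ab|cd) = a + max(b, c) - 2 - ⌈(b - a)/2⌉`,
and `mag({a,b,c}) = a + b - 2 - ⌈(b - a)/2⌉` (the case `b = c`). -/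
def mag (bs : Finset (Finset ℕ)) : ℕ :=
  let (a, b, c, _) := blockQuad bs
  a + max b c - 2 - (b - a + 1) / 2

/-- The area statistic on noncrossing partitions:
`area(π) = ∑_{β, β' ∈ π} #{ i ∈ β' : i < max β < max β' }` (ordered pairs of blocks). -/
def ncArea (bs : Finset (Finset ℕ)) : ℕ :=
  ∑ β ∈ bs, ∑ γ ∈ bs, (γ.filter (fun i => i < fmax β ∧ fmax β < fmax γ)).card

/-- The elements of the non-singleton blocks, listed in increasing order, with
the middle element of a size-3 block listed twice. -/
def nsList (bs : Finset (Finset ℕ)) : List ℕ :=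
  let l := ((nsBlocks bs).sup id).sort (· ≤ ·)
  if l.length = 3 then [l.getD 0 0, l.getD 1 0, l.getD 1 0, l.getD 2 0] else l

/-- The multiset of block sizes of a partition. -/
def blockSizes (bs : Finset (Finset ℕ)) : Multiset ℕ := bs.val.map Finset.card

/-- The image of a partition of `{1, …, n}` under the flip `i ↦ n + 1 - i`. -/
def flipBlocks (n : ℕ) (bs : Finset (Finset ℕ)) : Finset (Finset ℕ) :=
  bs.image (fun β => β.image (fun i => n + 1 - i))

/-! ### The mingarc statistic -/

/-- The gaps `ν_r = m_{r+1} - m_r - 1` between consecutive block minima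
`m_1 < ⋯ < m_h` (with `m_{h+1} = n + 1`). -/
def nuList (n : ℕ) (bs : Finset (Finset ℕ)) : List ℕ :=
  let ms := ((bs.image fmin).sort (· ≤ ·)) ++ [n + 1]
  (List.range (bs.image fmin).card).map (fun r => ms.getD (r + 1) 0 - ms.getD r 0 - 1)

/-- Concatenation of `replicate ν c` over a list of pairs `(c, ν)`. -/
def repeatEach : List (ℕ × ℕ) → List ℕ
  | [] => []
  | p :: r => List.replicate p.2 p.1 ++ repeatEach r

/-- The right endpoints `y_1 ≤ ⋯ ≤ y_{k-1}`: each block maximum `c_r` repeated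
`ν_r` times, in increasing order. -/
def ysList (n : ℕ) (bs : Finset (Finset ℕ)) : List ℕ :=
  repeatEach (List.zip ((bs.image fmax).sort (· ≤ ·)) (nuList n bs))

/-- The left endpoints `x_1 < ⋯ < x_{k-1}`: the elements of `{1, …, n}` that are not
block maxima, in increasing order. -/
def xsList (n : ℕ) (bs : Finset (Finset ℕ)) : List ℕ :=
  ((Finset.Icc 1 n).filter (fun i => i ∉ bs.image fmax)).sort (· ≤ ·)

/-- Greedy left-to-right selection of arcs: keep the first arc, and thereafter keep the
earliest arc whose left endpoint exceeds the right endpoint of the last kept arc. -/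
def greedyArcs : List (ℕ × ℕ) → Option ℕ → List (ℕ × ℕ)
  | [], _ => []
  | a :: rest, none => a :: greedyArcs rest (some a.2)
  | a :: rest, some r =>
      if r < a.1 then a :: greedyArcs rest (some a.2) else greedyArcs rest (some r)

/-- The mingarc statistic: the sum of `n - y_i` over the greedily selected
candidate arcs `[x_i, y_i]`. -/
def mingarc (n : ℕ) (bs : Finset (Finset ℕ)) : ℕ :=
  ((greedyArcs (List.zip (xsList n bs) (ysList n bs)) none).map (fun p => n - p.2)).sum

/-! ### The map η from polyominoes to noncrossing partitions -/

/-- Largest column index `i < m` with `colHeight lower i ≤ j`: the rightmost cell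
adjacent to the floor in row `j`. -/
def eFloor {m k : ℕ} (P : Polyomino m k) (j : ℕ) : ℕ :=
  (((List.range m).filter (fun i => decide (colHeight P.lower i ≤ j))).getLastD 0)

/-- Smallest column index `i` with `colHeight upper i ≥ j + 1`: the leftmost cell
adjacent to the ceiling in row `j` (with default `m - 1`). -/
def fCeil {m k : ℕ} (P : Polyomino m k) (j : ℕ) : ℕ :=
  (((List.range m).filter (fun i => decide (j + 1 ≤ colHeight P.upper i))).headD (m - 1))

/-- The number of cells adjacent to the ceiling in row `j`. -/
def rowCount {m k : ℕ} (P : Polyomino m k) (j : ℕ) : ℕ :=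
  fCeil P (j + 1) - fCeil P j + 1

/-- Pick, `cnt` times, the largest label in `{1, …, L}` not used yet. -/
def pickRow : ℕ → ℕ → Finset ℕ → Finset ℕ
  | 0, _, _ => ∅
  | cnt + 1, L, used =>
      let x := fmax ((Finset.Icc 1 L) \ used)
      insert x (pickRow cnt L (insert x used))

/-- The blocks of `η(P)`: label the cells adjacent to the floor `1, …, n` going bottom
to top, left to right (the label of the floor cell in column `i`, row `j` is
`i + j + 1`, and the labels present in rows `≤ j` are exactly `1, …, eFloor P j + j + 1`);
then going bottom to top, left to right over the cells adjacent to the ceiling, assign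
to each the largest unused indexing label occurring in the same row or below; the
blocks are the label sets of the ceiling rows. -/
def etaBlocks {m k : ℕ} (P : Polyomino m k) : Finset (Finset ℕ) :=
  (((List.range k).foldl
      (fun st j =>
        let B := pickRow (rowCount P j) (eFloor P j + j + 1) st.1
        (st.1 ∪ B, B :: st.2))
      ((∅ : Finset ℕ), ([] : List (Finset ℕ)))).2).toFinset



lemma finite_step : Finite Step := by
  refine Finite.of_injective (fun s : Step => decide (s = Step.E)) ?_
  intro a b h
  cases a <;> cases b <;> simp_all

lemma length_eq (w : List Step) : w.length = countE w + countN w := by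
  induction w with
  | nil => rfl
  | cons s w ih =>
    cases s <;> simp [countE, countN] at * <;> omega

lemma finite_poly (m n : ℕ) : Finite (Polyomino m n) := by
  have := finite_step
  have : Finite {l : List Step | l.length = m + n} := (List.finite_length_eq Step (m + n)).to_subtype
  refine Finite.of_injective
    (fun P : Polyomino m n =>
      ((⟨P.lower, by have := length_eq P.lower; rw [P.lowerE, P.lowerN] at this; exact this⟩,
        ⟨P.upper, by have := length_eq P.upper; rw [P.upperE, P.upperN] at this; exact this⟩) :
        {l : List Step | l.length = m + n} × {l : List Step | l.length = m + n})) ?_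
  intro P Q h
  cases P; cases Q
  simp at h
  simp [h]

lemma mem_pathPts (w : List Step) (p : ℕ × ℕ) :
    p ∈ pathPts w ↔ ∃ a b, w = a ++ b ∧ pathPos a = p := by
  simp only [pathPts, List.mem_toFinset, List.mem_map, List.mem_range]
  constructor
  · rintro ⟨i, -, h⟩
    exact ⟨w.take i, w.drop i, (List.take_append_drop i w).symm, h⟩
  · rintro ⟨a, b, rfl, h⟩
    exact ⟨a.length, by simp, by simpa using h⟩

lemma cha_append (a b : List Step) (h : ℕ) :
    colHeightsAux (a ++ b) h = colHeightsAux a h ++ colHeightsAux b (h + countN a) := by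
  induction a generalizing h with
  | nil => simp [colHeightsAux, countN]
  | cons s a ih =>
    cases s
    · simp [colHeightsAux, ih, countN]
    · simp [colHeightsAux, ih, countN]; congr 1; omega

lemma cha_length (w : List Step) (h : ℕ) : (colHeightsAux w h).length = countE w := by
  induction w generalizing h with
  | nil => rfl
  | cons s a ih => cases s <;> simp [colHeightsAux, ih, countE]

lemma cha_bound (w : List Step) (h : ℕ) :
    ∀ x ∈ colHeightsAux w h, h ≤ x ∧ x ≤ h + countN w := by
  induction w generalizing h with
  | nil => simp [colHeightsAux]
  | cons s a ih =>
    cases s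
    · intro x hx
      simp only [colHeightsAux, List.mem_cons] at hx
      have : countN (Step.E :: a) = countN a := by simp [countN]
      rcases hx with rfl | hx
      · omega
      · have := ih _ x hx; omega
    · intro x hx
      simp only [colHeightsAux] at hx
      have : countN (Step.N :: a) = countN a + 1 := by simp [countN]
      have := ih _ x hx; omega

lemma cha_sorted (w : List Step) (h : ℕ) : (colHeightsAux w h).Pairwise (· ≤ ·) := by
  induction w generalizing h with
  | nil => simp [colHeightsAux]
  | cons s a ih =>
    cases s
    · simp only [colHeightsAux, List.pairwise_cons]
      exact ⟨fun x hx => (cha_bound _ _ x hx).1, ih _⟩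
    · simpa only [colHeightsAux] using ih _

lemma exists_upper (w : List Step) (h : 1 ≤ countE w) :
    ∃ c U, w = List.replicate c Step.N ++ Step.E :: U := by
  induction w with
  | nil => simp [countE] at h
  | cons s w ih =>
    cases s
    · exact ⟨0, w, by simp⟩
    · obtain ⟨c, U, rfl⟩ := ih (by simpa [countE] using h)
      exact ⟨c + 1, U, by simp [List.replicate_succ]⟩

lemma exists_lower (w : List Step) (c : ℕ) (h : c < countN w) :
    ∃ A B, w = A ++ Step.N :: B ∧ countN A = c := by
  induction w generalizing c with
  | nil => simp [countN] at h
  | cons s w ih =>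
    cases s
    · obtain ⟨A, B, rfl, hA⟩ := ih c (by simpa [countN] using h)
      exact ⟨Step.E :: A, B, by simp, by simpa [countN] using hA⟩
    · rcases c with _ | c
      · exact ⟨[], w, by simp, by simp [countN]⟩
      · obtain ⟨A, B, rfl, hA⟩ := ih c (by simpa [countN] using h)
        exact ⟨Step.N :: A, B, by simp, by simpa [countN] using hA⟩

lemma upper_inj (c d : ℕ) (U V : List Step)
    (h : List.replicate c Step.N ++ Step.E :: Step.E :: U =
      List.replicate d Step.N ++ Step.E :: Step.E :: V) : c = d ∧ U = V := by
  induction c generalizing d with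
  | zero => cases d <;> simp_all [List.replicate_succ]
  | succ c ih =>
    cases d with
    | zero => simp [List.replicate_succ] at h
    | succ d =>
      have := ih d (by simpa [List.replicate_succ] using h)
      simpa using this
      
lemma lower_inj (A A' B B' : List Step) (hc : countN A = countN A')
    (h : A ++ Step.E :: Step.N :: B = A' ++ Step.E :: Step.N :: B') : A = A' ∧ B = B' := by
  induction A generalizing A' with
  | nil =>
    rcases A' with _ | ⟨s, A'⟩
    · simpa using h
    · rcases A' with _ | ⟨s', A'⟩ <;> simp [countN] at * 
      obtain ⟨rfl, rfl, h⟩ := h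
      simp at hc
  | cons s A ih =>
    rcases A' with _ | ⟨s', A'⟩
    · rcases A with _ | ⟨s', A⟩ <;> simp [countN] at * 
      obtain ⟨rfl, rfl, h⟩ := h
      simp at hc
    · simp only [List.cons_append, List.cons.injEq] at h
      obtain ⟨rfl, h⟩ := h
      have := ih A' (by cases s <;> simpa [countN] using hc) h
      simp [this]

lemma eastTarget_bounds (hL : ℕ → ℕ) (m x y : ℕ) (hx : x ≤ m) :
    x ≤ eastTarget hL m x y ∧ eastTarget hL m x y ≤ m := by
  unfold eastTarget
  rcases h : ((List.range m).filter (fun i => decide (x ≤ i ∧ y ≤ hL i))) with _ | ⟨b, l⟩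
  · simpa using hx
  · have : b ∈ ((List.range m).filter (fun i => decide (x ≤ i ∧ y ≤ hL i))) := by
      rw [h]; exact List.mem_cons_self
    simp at this
    simp
    omega

lemma eastTarget_eq (hL : ℕ → ℕ) (m x y t : ℕ) (ht : t ≤ m) (h1 : t < m → x ≤ t ∧ y ≤ hL t)
    (h2 : ∀ i < t, ¬ (x ≤ i ∧ y ≤ hL i)) : eastTarget hL m x y = t := by
  obtain ⟨d, rfl⟩ := Nat.exists_eq_add_of_le ht
  unfold eastTarget
  rw [List.range_add, List.filter_append]
  have : (List.range t).filter (fun i => decide (x ≤ i ∧ y ≤ hL i)) = [] := by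
    rw [List.filter_eq_nil_iff]
    intro i hi
    simpa using h2 i (by simpa using hi)
  rw [this]
  rcases d with _ | d
  · simp
  · have := h1 (by omega)
    rw [List.range_succ_eq_map]
    simp [List.filter_cons, this]

lemma eastTarget_shift (hL hL' : ℕ → ℕ) (m x y a : ℕ) (hx : a ≤ x)
    (h : ∀ i, a ≤ i → hL' (i + 1) = hL i) :
    eastTarget hL' (m + 1) (x + 1) y = eastTarget hL m x y + 1 := by
  unfold eastTarget
  rw [List.range_succ_eq_map]
  rw [List.filter_cons]
  simp only [List.filter_map]
  have : ((fun i => decide (x + 1 ≤ i ∧ y ≤ hL' i)) ∘ Nat.succ) =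
      (fun i => decide (x ≤ i ∧ y ≤ hL i)) := by
    funext i
    simp only [Function.comp, Nat.succ_eq_add_one, decide_eq_decide]
    constructor
    · rintro ⟨h1, h2⟩
      rw [h i (by omega)] at h2
      exact ⟨by omega, h2⟩
    · rintro ⟨h1, h2⟩
      rw [h i (by omega)]
      exact ⟨by omega, h2⟩
  rw [this]
  rcases ((List.range m).filter (fun i => decide (x ≤ i ∧ y ≤ hL i))) with _ | ⟨b, l⟩ <;> simp

lemma bounce_shift (hU hU' hL hL' : ℕ → ℕ) (m n a : ℕ) (ha : 1 ≤ a) (ham : a ≤ m)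
    (hu : ∀ i, hU' (i + 1) = hU i) (h : ∀ i, a ≤ i → hL' (i + 1) = hL i) (f : ℕ) :
    ∀ x y j, a ≤ x → x ≤ m →
      bounceAux hU' hL' (m + 1) n f (x + 1) y j = bounceAux hU hL m n f x y j := by
  induction f with
  | zero => intros; rfl
  | succ f ih =>
    intro x y j hx hxm
    simp only [bounceAux]
    have e1 : hU' (x + 1 - 1) = hU (x - 1) := by
      rw [← hu (x - 1)]; congr 1; omega
    rw [e1, eastTarget_shift hL hL' m x _ a hx h]
    have hb := eastTarget_bounds hL m x (hU (x - 1)) hxm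
    by_cases hc : x = m ∧ y = n
    · simp [hc]
    · rw [if_neg hc, if_neg (by omega)]
      by_cases hn : hU (x - 1) = n
      · simp only [hn, if_true]
        rw [ih m n (j + 1) ham le_rfl]
        congr 2; omega
      · simp only [hn, if_false]
        rw [ih _ _ (j + 1) (by omega) hb.2]
        congr 2; omega

lemma bounce_fix (hU hL : ℕ → ℕ) (m n x y : ℕ) (h1 : hU (x - 1) = y)
    (h2 : (if y = n then m else eastTarget hL m x y) = x) (f : ℕ) :
    ∀ j, bounceAux hU hL m n f x y j = 0 := by
  induction f with
  | zero => intros; rfl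
  | succ f ih =>
    intro j
    simp only [bounceAux, h1, h2, ih]
    simp

lemma bounce_fuel (hU hL : ℕ → ℕ) (m n : ℕ) (hle : ∀ i < m, hU i ≤ n)
    (hmono : ∀ i j, i ≤ j → j < m → hU i ≤ hU j) (f : ℕ) :
    ∀ x y j, 1 ≤ x → x ≤ m → y ≤ hU (x - 1) → (m - x) + (n - y) ≤ f →
      bounceAux hU hL m n (f + 1) x y j = bounceAux hU hL m n f x y j := by
  induction f with
  | zero =>
    intro x y j h1 h2 h3 h4
    have := hle (x - 1) (by omega)
    have hc : x = m ∧ y = n := by omega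
    simp [bounceAux, hc]
  | succ f ih =>
    intro x y j h1 h2 h3 h4
    by_cases hfix : hU (x - 1) = y ∧ (if y = n then m else eastTarget hL m x y) = x
    · rw [bounce_fix hU hL m n x y hfix.1 hfix.2, bounce_fix hU hL m n x y hfix.1 hfix.2]
    · rw [bounceAux, bounceAux]
      by_cases hc : x = m ∧ y = n
      · simp [hc]
      rw [if_neg hc, if_neg hc]
      simp only
      have hn := hle (x - 1) (by omega)
      have hb := eastTarget_bounds hL m x (hU (x - 1)) h2
      obtain ⟨x', hx'⟩ : ∃ x', x' = (if hU (x - 1) = n then m else eastTarget hL m x (hU (x - 1))) :=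
        ⟨_, rfl⟩
      rw [← hx']
      have hb' : x ≤ x' ∧ x' ≤ m := by
        rw [hx']; split_ifs
        · exact ⟨h2, le_rfl⟩
        · exact hb
      have hne : ¬ (hU (x - 1) = y ∧ x' = x) := by
        rintro ⟨e1, e2⟩
        apply hfix
        refine ⟨e1, ?_⟩
        rw [e1] at hx'
        rw [← hx', e2]
      rw [ih x' (hU (x - 1)) (j + 1) (by omega) hb'.2 (hmono _ _ (by omega) (by omega)) (by omega)]

lemma bounce_main (hU hU' hL hL' : ℕ → ℕ) (m n a c : ℕ) (ha : 1 ≤ a) (ham : a ≤ m) (hn : 1 ≤ n)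
    (hle : ∀ i < m, hU i ≤ n)
    (hmono : ∀ i j, i ≤ j → j < m → hU i ≤ hU j)
    (hU0 : hU 0 = c + 1) (hU0' : hU' 0 = c + 1)
    (hu : ∀ i, hU' (i + 1) = hU i) (h : ∀ i, a ≤ i → hL' (i + 1) = hL i)
    (h1 : ∀ i < a, hL' i = hL i) (h2 : hL' a = c) (h3 : ∀ i < a, hL i ≤ c)
    (h4 : ∀ i, a ≤ i → i < m → c + 1 ≤ hL i) :
    bounceAux hU' hL' (m + 1) n (m + 1 + n + 2) 1 0 0 =
      bounceAux hU hL m n (m + n + 2) 1 0 0 + 1 := by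
  have e1 : eastTarget hL m 1 (c + 1) = a := by
    apply eastTarget_eq _ _ _ _ _ ham
    · intro hh; exact ⟨ha, h4 a le_rfl hh⟩
    · intro i hi; have := h3 i hi; omega
  have e2 : eastTarget hL' (m + 1) 1 (c + 1) = a + 1 := by
    apply eastTarget_eq _ _ _ _ _ (by omega)
    · intro hh; rw [h a le_rfl]; exact ⟨by omega, h4 a le_rfl (by omega)⟩
    · intro i hi
      rcases Nat.lt_or_ge i a with hia | hia
      · have := h3 i hia; rw [h1 i hia]; omega
      · have : i = a := by omega
        subst this; omega
  rw [show m + 1 + n + 2 = (m + n + 1 + 1) + 1 by omega, show m + n + 2 = (m + n + 1) + 1 by omega]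
  rw [bounceAux.eq_2 hU' hL' (m + 1) n 1 0 0 (m + n + 1 + 1), bounceAux.eq_2 hU hL m n 1 0 0 (m + n + 1)]
  rw [if_neg (by omega), if_neg (by omega)]
  simp only [Nat.sub_self, hU0, hU0', e1, e2]
  by_cases hc : c + 1 = n
  · simp only [hc, if_true]
    rw [bounce_shift hU hU' hL hL' m n a ha ham hu h _ m n _ ham le_rfl]
    rw [bounce_fuel hU hL m n hle hmono _ m n _ (by omega) le_rfl]
    · omega
    · rw [← hc, ← hU0]; exact hmono _ _ (by omega) (by omega)
    · omega
  · simp only [hc, if_false]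
    rw [bounce_shift hU hU' hL hL' m n a ha ham hu h _ a _ _ le_rfl ham]
    rw [bounce_fuel hU hL m n hle hmono _ a _ _ (by omega) ham]
    · omega
    · rw [← hU0]; exact hmono _ _ (by omega) (by omega)
    · omega

lemma area_main (hU hU' hL hL' : ℕ → ℕ) (m a c : ℕ) (ham : a ≤ m)
    (hU0' : hU' 0 = c + 1)
    (hu : ∀ i, hU' (i + 1) = hU i) (h : ∀ i, a ≤ i → hL' (i + 1) = hL i)
    (h1 : ∀ i < a, hL' i = hL i) (h2 : hL' a = c)
    (hle : ∀ i < m, hL i ≤ hU i) (hle' : ∀ i < m + 1, hL' i ≤ hU' i) :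
    ∑ i ∈ Finset.range (m + 1), (hU' i - hL' i) = ∑ i ∈ Finset.range m, (hU i - hL i) + 1 := by
  have s1 : ∑ i ∈ Finset.range m, (hU i - hL i) + ∑ i ∈ Finset.range m, hL i
      = ∑ i ∈ Finset.range m, hU i := by
    rw [← Finset.sum_add_distrib]
    exact Finset.sum_congr rfl fun i hi => Nat.sub_add_cancel (hle i (by simpa using hi))
  have s2 : ∑ i ∈ Finset.range (m + 1), (hU' i - hL' i) + ∑ i ∈ Finset.range (m + 1), hL' i
      = ∑ i ∈ Finset.range (m + 1), hU' i := by
    rw [← Finset.sum_add_distrib]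
    exact Finset.sum_congr rfl fun i hi => Nat.sub_add_cancel (hle' i (by simpa using hi))
  have s3 : ∑ i ∈ Finset.range (m + 1), hU' i = ∑ i ∈ Finset.range m, hU i + (c + 1) := by
    rw [Finset.sum_range_succ', hU0']
    simp [hu]
  have s4 : ∑ i ∈ Finset.range (m + 1), hL' i = ∑ i ∈ Finset.range m, hL i + c := by
    obtain ⟨d, rfl⟩ := Nat.exists_eq_add_of_le ham
    rw [add_assoc, Finset.sum_range_add hL' a (d + 1), Finset.sum_range_add hL a d, Finset.sum_range_succ']
    have t1 : ∑ i ∈ Finset.range a, hL' i = ∑ i ∈ Finset.range a, hL i :=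
      Finset.sum_congr rfl fun i hi => h1 i (by simpa using hi)
    have t2 : ∑ i ∈ Finset.range d, hL' (a + (i + 1)) = ∑ i ∈ Finset.range d, hL (a + i) :=
      Finset.sum_congr rfl fun i hi => h (a + i) (by omega)
    rw [t1, t2, add_zero, h2]
    omega
  omega


lemma sub_aux (t m n : ℕ) (hn : 1 ≤ n) : t + 1 - (m + 1 + n - 1) = t - (m + n - 1) := by omega

lemma getD_mem' (l : List ℕ) (i : ℕ) (hi : i < l.length) : l.getD i 0 ∈ l := by
  rw [List.getD_eq_getElem _ _ hi]; exact List.getElem_mem hi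

lemma exists_ext {m n : ℕ} (hm : 1 ≤ m) (hn : 1 ≤ n) (P : Polyomino m n) :
    ∃ Q : Polyomino (m + 1) n, area Q = area P ∧ bounce Q = bounce P ∧
      ∃ c U A B, countN A = c ∧ P.upper = List.replicate (c + 1) Step.N ++ Step.E :: U ∧
        P.lower = A ++ Step.N :: B ∧
        Q.upper = List.replicate (c + 1) Step.N ++ Step.E :: Step.E :: U ∧
        Q.lower = A ++ Step.E :: Step.N :: B := by
  obtain ⟨lower, upper, lE, lN, uE, uN, above, meet⟩ := P
  have meet' : ∀ p, p ∈ pathPts upper → p ∈ pathPts lower → p = (0, 0) ∨ p = (m, n) := by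
    intro p h1 h2
    have : p ∈ pathPts upper ∩ pathPts lower := Finset.mem_inter.2 ⟨h1, h2⟩
    rw [meet] at this
    simpa using this
  obtain ⟨c, U, rfl⟩ := exists_upper upper (by omega)
  -- the upper path starts with a north step
  rcases c with _ | c
  · exfalso
    have a0 := above 0 (by omega)
    rcases lower with _ | ⟨s, L⟩
    · simp [countE] at lE; omega
    · cases s
      · have := meet' (1, 0) ((mem_pathPts _ _).2 ⟨[Step.E], U, by simp, by simp [pathPos, countE, countN]⟩)
          ((mem_pathPts _ _).2 ⟨[Step.E], L, by simp, by simp [pathPos, countE, countN]⟩)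
        simp at this; omega
      · have h1 : colHeight (List.replicate 0 Step.N ++ Step.E :: U) 0 = 0 := by
          simp [colHeight, colHeightsAux]
        have h2 : colHeight (Step.N :: L) 0 ∈ colHeightsAux (Step.N :: L) 0 :=
          getD_mem' _ _ (by rw [cha_length]; omega)
        have h3 : 1 ≤ colHeight (Step.N :: L) 0 := by
          have := cha_bound L 1 _ h2
          exact this.1
        omega
  have hcN : countN (List.replicate (c + 1) Step.N) = c + 1 := by simp [countN]
  have hcE : countE (List.replicate (c + 1) Step.N) = 0 := by
    simp [countE, List.count_replicate]
  have hUN : c + 1 + countN U = n := by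
    rw [← uN]; simp [countN]
  have hUE : countE U + 1 = m := by
    rw [← uE]; simp [countE, List.count_replicate]
  obtain ⟨A, B, rfl, hA⟩ := exists_lower lower c (by omega)
  have hBN : c + 1 + countN B = n := by
    rw [← lN, ← hA]; simp [countN]; omega
  have hBE : countE A + countE B = m := by
    rw [← lE]; simp [countE]
  have ptsU0 : ∀ y ≤ c + 1, (0, y) ∈ pathPts (List.replicate (c + 1) Step.N ++ Step.E :: U) := by
    intro y hy
    refine (mem_pathPts _ _).2 ⟨List.replicate y Step.N,
      List.replicate (c + 1 - y) Step.N ++ Step.E :: U, ?_, ?_⟩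
    · rw [← List.append_assoc, List.replicate_append_replicate]; congr 2; omega
    · simp [pathPos, countE, countN, List.count_replicate]
  have ha : 1 ≤ countE A := by
    by_contra hcon
    have h0 : countE A = 0 := by omega
    have := meet' (0, c + 1) (ptsU0 _ le_rfl) ((mem_pathPts _ _).2 ⟨A ++ [Step.N], B, by simp, by
      simp [pathPos, countE, countN] at *; omega⟩)
    simp at this; omega
  -- heights
  have HU : colHeightsAux (List.replicate (c + 1) Step.N ++ Step.E :: U) 0
      = (c + 1) :: colHeightsAux U (c + 1) := by
    have : ∀ d h, colHeightsAux (List.replicate d Step.N) h = [] := by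
      intro d; induction d with
      | zero => intro h; rfl
      | succ d ih => intro h; simp [List.replicate_succ, colHeightsAux, ih]
    rw [cha_append, this, hcN]; simp [colHeightsAux]
  have HU' : colHeightsAux (List.replicate (c + 1) Step.N ++ Step.E :: Step.E :: U) 0
      = (c + 1) :: (c + 1) :: colHeightsAux U (c + 1) := by
    have : ∀ d h, colHeightsAux (List.replicate d Step.N) h = [] := by
      intro d; induction d with
      | zero => intro h; rfl
      | succ d ih => intro h; simp [List.replicate_succ, colHeightsAux, ih]
    rw [cha_append, this, hcN]; simp [colHeightsAux]
  have HL : colHeightsAux (A ++ Step.N :: B) 0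
      = colHeightsAux A 0 ++ colHeightsAux B (c + 1) := by
    rw [cha_append, hA]; simp [colHeightsAux]
  have HL' : colHeightsAux (A ++ Step.E :: Step.N :: B) 0
      = colHeightsAux A 0 ++ c :: colHeightsAux B (c + 1) := by
    rw [cha_append, hA]; simp [colHeightsAux]
  have lA := cha_length A 0
  have lB := cha_length B (c + 1)
  have lU := cha_length U (c + 1)
  have hU0 : colHeight (List.replicate (c + 1) Step.N ++ Step.E :: U) 0 = c + 1 := by
    simp [colHeight, HU]
  have hU0' : colHeight (List.replicate (c + 1) Step.N ++ Step.E :: Step.E :: U) 0 = c + 1 := by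
    simp [colHeight, HU']
  have hu : ∀ i, colHeight (List.replicate (c + 1) Step.N ++ Step.E :: Step.E :: U) (i + 1)
      = colHeight (List.replicate (c + 1) Step.N ++ Step.E :: U) i := by
    intro i; unfold colHeight; rw [HU, HU', List.getD_cons_succ]
  have h1 : ∀ i < countE A, colHeight (A ++ Step.E :: Step.N :: B) i
      = colHeight (A ++ Step.N :: B) i := by
    intro i hi; unfold colHeight
    rw [HL, HL', List.getD_append _ _ _ _ (by omega), List.getD_append _ _ _ _ (by omega)]
  have h2 : colHeight (A ++ Step.E :: Step.N :: B) (countE A) = c := by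
    unfold colHeight
    rw [HL', List.getD_append_right _ _ _ _ (by omega), lA]; simp
  have h : ∀ i, countE A ≤ i → colHeight (A ++ Step.E :: Step.N :: B) (i + 1)
      = colHeight (A ++ Step.N :: B) i := by
    intro i hi; unfold colHeight
    rw [HL, HL', List.getD_append_right _ _ _ _ (by omega),
      List.getD_append_right _ _ _ _ (by omega), lA,
      show i + 1 - countE A = (i - countE A) + 1 by omega, List.getD_cons_succ]
  have h3 : ∀ i < countE A, colHeight (A ++ Step.N :: B) i ≤ c := by
    intro i hi; unfold colHeight
    rw [HL, List.getD_append _ _ _ _ (by omega)]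
    have := cha_bound A 0 _ (getD_mem' (colHeightsAux A 0) i (by omega))
    omega
  have h4 : ∀ i, countE A ≤ i → i < m → c + 1 ≤ colHeight (A ++ Step.N :: B) i := by
    intro i hi him; unfold colHeight
    rw [HL, List.getD_append_right _ _ _ _ (by omega)]
    exact (cha_bound B (c + 1) _ (getD_mem' _ _ (by omega))).1
  have hle : ∀ i < m, colHeight (List.replicate (c + 1) Step.N ++ Step.E :: U) i ≤ n := by
    intro i hi
    have := cha_bound (List.replicate (c + 1) Step.N ++ Step.E :: U) 0 _
      (getD_mem' _ i (by rw [cha_length, uE]; exact hi))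
    rw [uN] at this
    unfold colHeight
    omega
  have hmono : ∀ i j, i ≤ j → j < m → colHeight (List.replicate (c + 1) Step.N ++ Step.E :: U) i
      ≤ colHeight (List.replicate (c + 1) Step.N ++ Step.E :: U) j := by
    intro i j hij hj
    have hlen : (colHeightsAux (List.replicate (c + 1) Step.N ++ Step.E :: U) 0).length = m := by
      rw [cha_length, uE]
    rcases hij.eq_or_lt with rfl | hij
    · exact le_rfl
    · unfold colHeight
      rw [List.getD_eq_getElem _ _ (by omega), List.getD_eq_getElem _ _ (by omega)]
      exact List.pairwise_iff_getElem.1 (cha_sorted _ _) i j (by omega) (by omega) hij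
  have above' : ∀ i < m + 1, colHeight (A ++ Step.E :: Step.N :: B) i ≤
      colHeight (List.replicate (c + 1) Step.N ++ Step.E :: Step.E :: U) i := by
    intro i hi
    have hge : c + 1 ≤ colHeight (List.replicate (c + 1) Step.N ++ Step.E :: Step.E :: U) i := by
      rcases i with _ | i
      · omega
      · have hm0 := hmono 0 i (by omega) (by omega)
        rw [hU0] at hm0
        rw [hu]; exact hm0
    rcases lt_trichotomy i (countE A) with hia | hia | hia
    · rw [h1 i hia]; have := h3 i hia; omega
    · have h2' := h2
      rw [← hia] at h2'
      omega
    · obtain ⟨i, rfl⟩ : ∃ j, i = j + 1 := ⟨i - 1, by omega⟩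
      rw [h i (by omega), hu]
      exact above i (by omega)
  have uE' : countE (List.replicate (c + 1) Step.N ++ Step.E :: Step.E :: U) = m + 1 := by
    rw [← uE]; simp [countE]; omega
  have uN' : countN (List.replicate (c + 1) Step.N ++ Step.E :: Step.E :: U) = n := by
    rw [← uN]; simp [countN]
  have lE' : countE (A ++ Step.E :: Step.N :: B) = m + 1 := by
    rw [← lE]; simp [countE]; omega
  have lN' : countN (A ++ Step.E :: Step.N :: B) = n := by
    rw [← lN]; simp [countN]
  have ptsU' : ∀ p ∈ pathPts (List.replicate (c + 1) Step.N ++ Step.E :: Step.E :: U),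
      (p.1 = 0 ∧ p.2 ≤ c + 1) ∨ p = (1, c + 1) ∨
        (2 ≤ p.1 ∧ c + 1 ≤ p.2 ∧
          (p.1 - 1, p.2) ∈ pathPts (List.replicate (c + 1) Step.N ++ Step.E :: U)) := by
    intro p hp
    obtain ⟨x, y, hxy, rfl⟩ := (mem_pathPts _ _).1 hp
    rcases List.append_eq_append_iff.1 hxy with ⟨z, hz1, hz2⟩ | ⟨z, hz1, hz2⟩
    · rcases z with _ | ⟨s, z⟩
      · left
        rw [hz1]; simp [pathPos, countE, countN, List.count_replicate]
      · rcases z with _ | ⟨s', z⟩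
        · simp at hz2
          right; left
          rw [hz1, ← hz2.1]; simp [pathPos, countE, countN, List.count_replicate]
        · simp at hz2
          obtain ⟨rfl, rfl, hz⟩ := hz2
          right; right
          rw [hz1]
          refine ⟨?_, ?_, ?_⟩
          · simp [pathPos, countE]; omega
          · simp [pathPos, countN]
          · refine (mem_pathPts _ _).2 ⟨List.replicate (c + 1) Step.N ++ Step.E :: z, y, ?_, ?_⟩
            · simp [hz]
            · simp [pathPos, countE, countN]
    · left
      have e1 : countE (List.replicate (c + 1) Step.N) = countE x + countE z := by
        rw [hz1]; simp [countE]
      have e2 : countN (List.replicate (c + 1) Step.N) = countN x + countN z := by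
        rw [hz1]; simp [countN]
      simp only [pathPos]
      omega
  have ptsL' : ∀ p ∈ pathPts (A ++ Step.E :: Step.N :: B),
      (p.2 ≤ c ∧ p ∈ pathPts (A ++ Step.N :: B)) ∨
        (1 ≤ p.1 ∧ (p.1 - 1, p.2) ∈ pathPts (A ++ Step.N :: B)) := by
    intro p hp
    obtain ⟨x, y, hxy, rfl⟩ := (mem_pathPts _ _).1 hp
    rcases List.append_eq_append_iff.1 hxy with ⟨z, hz1, hz2⟩ | ⟨z, hz1, hz2⟩
    · rcases z with _ | ⟨s, z⟩
      · left
        refine ⟨?_, (mem_pathPts _ _).2 ⟨A, Step.N :: B, rfl, ?_⟩⟩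
        · rw [hz1]; simp [pathPos, hA]
        · rw [hz1]; simp
      · simp at hz2
        obtain ⟨rfl, hz⟩ := hz2
        right
        rw [hz1]
        refine ⟨?_, (mem_pathPts _ _).2 ⟨A ++ z, y, ?_, ?_⟩⟩
        · simp [pathPos, countE]; omega
        · simp [hz]
        · simp [pathPos, countE, countN]
    · left
      refine ⟨?_, (mem_pathPts _ _).2 ⟨x, z ++ Step.N :: B, ?_, rfl⟩⟩
      · have e2 : countN A = countN x + countN z := by
          rw [hz1]; simp [countN]
        simp only [pathPos]; omega
      · rw [hz1]; simp
  have meetQ : pathPts (List.replicate (c + 1) Step.N ++ Step.E :: Step.E :: U) ∩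
      pathPts (A ++ Step.E :: Step.N :: B) = {(0, 0), (m + 1, n)} := by
    ext p
    simp only [Finset.mem_inter, Finset.mem_insert, Finset.mem_singleton]
    constructor
    · rintro ⟨hp1, hp2⟩
      obtain ⟨px, py⟩ := p
      rcases ptsU' _ hp1 with ⟨q1, q2⟩ | q | ⟨q1, q2, q3⟩ <;>
        rcases ptsL' _ hp2 with ⟨r1, r2⟩ | ⟨r1, r2⟩
      · simp only at q1 q2
        subst q1
        have := meet' _ (ptsU0 _ q2) r2
        simp at this ⊢; omega
      · simp at q1 r1; omega
      · simp at q r1; omega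
      · simp at q
        obtain ⟨rfl, rfl⟩ := q
        have := meet' _ (ptsU0 _ le_rfl) r2
        simp at this; omega
      · simp at q2 r1; omega
      · have := meet' _ q3 r2
        simp at this q1 q2 ⊢; omega
    · rintro (rfl | rfl)
      · exact ⟨(mem_pathPts _ _).2 ⟨[], _, rfl, rfl⟩, (mem_pathPts _ _).2 ⟨[], _, rfl, rfl⟩⟩
      · exact ⟨(mem_pathPts _ _).2 ⟨_, [], (List.append_nil _).symm, by rw [pathPos, uE', uN']⟩,
          (mem_pathPts _ _).2 ⟨_, [], (List.append_nil _).symm, by rw [pathPos, lE', lN']⟩⟩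
  have ar := area_main (colHeight (List.replicate (c + 1) Step.N ++ Step.E :: U))
      (colHeight (List.replicate (c + 1) Step.N ++ Step.E :: Step.E :: U))
      (colHeight (A ++ Step.N :: B)) (colHeight (A ++ Step.E :: Step.N :: B))
      m (countE A) c (by omega) hU0' hu h h1 h2 above above'
  have bo := bounce_main (colHeight (List.replicate (c + 1) Step.N ++ Step.E :: U))
      (colHeight (List.replicate (c + 1) Step.N ++ Step.E :: Step.E :: U))
      (colHeight (A ++ Step.N :: B)) (colHeight (A ++ Step.E :: Step.N :: B))
      m n (countE A) c ha (by omega) hn hle hmono hU0 hU0' hu h h1 h2 h3 h4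
  refine ⟨⟨_, _, lE', lN', uE', uN', above', meetQ⟩, ?_, ?_, c, U, A, B, hA, rfl, rfl, rfl, rfl⟩
  · unfold area
    simp only
    rw [ar]
    omega
  · unfold bounce
    dsimp only
    rw [bo]
    exact sub_aux _ m n hn

/-- For every fixed `k ≥ 1`, each coefficient of `N_{m,k}(q,t)` is nondecreasing in `m`:
for all `m ≥ k + 1` and `u v`, the number of `P ∈ PP(m-k, k)` with `area P = u` and
`bounce P = v` is at most the number of `P ∈ PP(m-k+1, k)` with `area P = u` and
`bounce P = v` (so the incremental polynomial `N_{m,k} - N_{m-1,k}` has nonnegative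
coefficients). -/
theorem incremental_narayana_nonneg (k : ℕ) (hk : 1 ≤ k) (m : ℕ) (hm : k + 1 ≤ m)
    (u v : ℕ) :
    Nat.card {P : Polyomino (m - k) k // area P = u ∧ bounce P = v} ≤
    Nat.card {P : Polyomino (m - k + 1) k // area P = u ∧ bounce P = v} := by
  have hmk : 1 ≤ m - k := by omega
  generalize m - k = M at *
  choose f hf1 hf2 hf3 using fun P : Polyomino M k => exists_ext hmk hk P
  have := finite_poly (M + 1) k
  refine Nat.card_le_card_of_injective
    (fun P : {P : Polyomino M k // area P = u ∧ bounce P = v} =>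
      (⟨f P.1, by rw [hf1, hf2]; exact P.2⟩ :
        {P : Polyomino (M + 1) k // area P = u ∧ bounce P = v})) ?_
  rintro ⟨P, hP⟩ ⟨Q, hQ⟩ h
  have h' : f P = f Q := congrArg Subtype.val h
  apply Subtype.ext
  obtain ⟨c, U, A, B, a1, a2, a3, a4, a5⟩ := hf3 P
  obtain ⟨d, V, A', B', b1, b2, b3, b4, b5⟩ := hf3 Q
  have e1 := upper_inj (c + 1) (d + 1) U V (by rw [← a4, ← b4, h'])
  have ecd : c = d := by omega
  have e2 := lower_inj A A' B B' (by rw [a1, b1, ecd]) (by rw [← a5, ← b5, h'])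
  have eu : P.upper = Q.upper := by rw [a2, b2, ecd, e1.2]
  have el : P.lower = Q.lower := by rw [a3, b3, e2.1, e2.2]
  cases P; cases Q
  simp at eu el
  simp [eu, el]

end QtN
end

section
/- For all n ≥ k ≥ 1 and every parallelogram polyomino P ∈ PP(n−k+1, k), the area of P equals the area of the noncrossing partition η(P), i.e., area(P) = Σ_{β,β'∈η(P)} #{ i ∈ β' : i < max β < max β' }, where the sum is over ordered pairs of blocks of η(P). -/
namespace QtN

/-! ### Helper lemmas -/

theorem aux_length (w : List Step) : ∀ h, (colHeightsAux w h).length = countE w := by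
  induction w with
  | nil => intro h; simp [colHeightsAux, countE]
  | cons s r ih =>
    intro h
    cases s
    · simp only [colHeightsAux, List.length_cons, ih]; simp [countE]
    · simp only [colHeightsAux, ih]; simp [countE]

theorem aux_bounds (w : List Step) : ∀ h i, i < countE w →
    h ≤ (colHeightsAux w h).getD i 0 ∧ (colHeightsAux w h).getD i 0 ≤ h + countN w := by
  induction w with
  | nil => intro h i hi; simp [countE] at hi
  | cons s r ih =>
    intro h i hi
    cases s
    · simp only [colHeightsAux]
      have h2 : countN (Step.E :: r) = countN r := by simp [countN]
      have h3 : countE (Step.E :: r) = countE r + 1 := by simp [countE]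
      rw [h2]
      cases i with
      | zero => simp
      | succ i => simpa using ih h i (by omega)
    · simp only [colHeightsAux]
      have h2 : countN (Step.N :: r) = countN r + 1 := by simp [countN]
      have h3 : countE (Step.N :: r) = countE r := by simp [countE]
      have := ih (h+1) i (by omega)
      omega

theorem aux_mono (w : List Step) : ∀ h i, i + 1 < countE w →
    (colHeightsAux w h).getD i 0 ≤ (colHeightsAux w h).getD (i+1) 0 := by
  induction w with
  | nil => intro h i hi; simp [countE] at hi
  | cons s r ih =>
    intro h i hi
    cases s
    · simp only [colHeightsAux]
      have h3 : countE (Step.E :: r) = countE r + 1 := by simp [countE]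
      cases i with
      | zero => simpa using (aux_bounds r h 0 (by omega)).1
      | succ i => simpa using ih h i (by omega)
    · simp only [colHeightsAux]
      have h3 : countE (Step.N :: r) = countE r := by simp [countE]
      exact ih (h+1) i (by omega)

theorem aux_pts (w : List Step) : ∀ h x y, x ≤ countE w → h ≤ y → y ≤ h + countN w →
    (∀ z, x = z + 1 → (colHeightsAux w h).getD z 0 ≤ y) →
    (x < countE w → y ≤ (colHeightsAux w h).getD x 0) →
    ∃ i ≤ w.length, countE (w.take i) = x ∧ h + countN (w.take i) = y := by
  induction w with
  | nil =>
    intro h x y hx hy hy' _ _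
    simp [countE, countN] at *
    omega
  | cons s r ih =>
    intro h x y hx hy hy' h1 h2
    cases s
    · have e2 : ∀ r, countN (Step.E :: r) = countN r := by simp [countN]
      have e3 : ∀ r, countE (Step.E :: r) = countE r + 1 := by simp [countE]
      simp only [colHeightsAux] at h1 h2
      rw [e3] at hx h2
      rw [e2] at hy'
      cases x with
      | zero =>
        have := h2 (by omega)
        simp at this
        refine ⟨0, by omega, by simp [countE], ?_⟩
        simp [countN]; omega
      | succ x =>
        obtain ⟨i, hi, hi1, hi2⟩ := ih h x y (by omega) hy hy' (by
          intro z hz; have := h1 (z+1) (by omega); simpa using this) (by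
          intro hz; have := h2 (by omega); simpa using this)
        refine ⟨i+1, by simpa using hi, ?_, ?_⟩
        · rw [List.take_succ_cons, e3, hi1]
        · rw [List.take_succ_cons, e2, hi2]
    · have e2 : ∀ r, countN (Step.N :: r) = countN r + 1 := by simp [countN]
      have e3 : ∀ r, countE (Step.N :: r) = countE r := by simp [countE]
      simp only [colHeightsAux] at h1 h2
      rw [e3] at hx h2
      rw [e2] at hy'
      by_cases hyh : y = h
      · have hx0 : x = 0 := by
          by_contra hne
          have a := h1 (x-1) (by omega)
          have b := (aux_bounds r (h+1) (x-1) (by omega)).1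
          omega
        refine ⟨0, by omega, ?_, ?_⟩
        · simp [countE, hx0]
        · simp [countN, hyh]
      · obtain ⟨i, hi, hi1, hi2⟩ := ih (h+1) x y (by omega) (by omega) (by omega) h1 h2
        refine ⟨i+1, by simpa using hi, ?_, ?_⟩
        · rw [List.take_succ_cons, e3, hi1]
        · rw [List.take_succ_cons, e2]; omega

theorem mem_pts (w : List Step) (x y : ℕ) (hx : x ≤ countE w) (hy : y ≤ countN w)
    (h1 : ∀ z, x = z + 1 → colHeight w z ≤ y)
    (h2 : x < countE w → y ≤ colHeight w x) : (x, y) ∈ pathPts w := by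
  obtain ⟨i, hi, hi1, hi2⟩ := aux_pts w 0 x y hx (by omega) (by omega) h1 h2
  simp only [pathPts, List.mem_toFinset, List.mem_map, List.mem_range]
  refine ⟨i, by omega, ?_⟩
  simp only [pathPos, hi1, Prod.mk.injEq, true_and]
  omega

theorem ch_le (w : List Step) (i : ℕ) (hi : i < countE w) : colHeight w i ≤ countN w := by
  have := (aux_bounds w 0 i hi).2
  simpa [colHeight] using this

theorem ch_mono (w : List Step) {i j : ℕ} (hij : i ≤ j) (hj : j < countE w) :
    colHeight w i ≤ colHeight w j := by
  induction j, hij using Nat.le_induction with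
  | base => exact le_rfl
  | succ j hij ih => exact (ih (by omega)).trans (aux_mono w 0 j hj)

section poly
variable {m k : ℕ}

theorem not_both (P : Polyomino m k) (x y : ℕ) (hx : x ≤ m) (hy : y ≤ k)
    (h0 : ¬ (x = 0 ∧ y = 0)) (h1 : ¬ (x = m ∧ y = k))
    (hu1 : ∀ z, x = z + 1 → colHeight P.upper z ≤ y)
    (hu2 : x < m → y ≤ colHeight P.upper x)
    (hl1 : ∀ z, x = z + 1 → colHeight P.lower z ≤ y)
    (hl2 : x < m → y ≤ colHeight P.lower x) : False := by
  have a := mem_pts P.upper x y (by rw [P.upperE]; exact hx) (by rw [P.upperN]; exact hy) hu1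
    (by rw [P.upperE]; exact hu2)
  have b := mem_pts P.lower x y (by rw [P.lowerE]; exact hx) (by rw [P.lowerN]; exact hy) hl1
    (by rw [P.lowerE]; exact hl2)
  have c := Finset.mem_inter.2 ⟨a, b⟩
  rw [P.meet] at c
  simp at c
  omega

theorem u_le (P : Polyomino m k) (i : ℕ) (hi : i < m) : colHeight P.upper i ≤ k := by
  have := ch_le P.upper i (by rw [P.upperE]; exact hi)
  rwa [P.upperN] at this

theorem l_zero (P : Polyomino m k) (hm : 1 ≤ m) (hk : 1 ≤ k) : colHeight P.lower 0 = 0 := by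
  by_contra hne
  have := P.above 0 (by omega)
  exact not_both P 0 1 (by omega) (by omega) (by omega) (by omega) (by omega) (by omega)
    (by omega) (by omega)

theorem u_zero (P : Polyomino m k) (hm : 1 ≤ m) (hk : 1 ≤ k) : 1 ≤ colHeight P.upper 0 := by
  by_contra hne
  have := P.above 0 (by omega)
  refine not_both P 1 0 (by omega) (by omega) (by omega) (by omega) ?_ (by omega) ?_ (by omega)
  · intro z hz; obtain rfl : z = 0 := by omega
    omega
  · intro z hz; obtain rfl : z = 0 := by omega
    omega

theorem u_last (P : Polyomino m k) (hm : 1 ≤ m) (hk : 1 ≤ k) : colHeight P.upper (m-1) = k := by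
  by_contra hne
  have := P.above (m-1) (by omega)
  have := u_le P (m-1) (by omega)
  refine not_both P m (k-1) (by omega) (by omega) (by omega) (by omega) ?_ (by omega) ?_ (by omega)
  · intro z hz; obtain rfl : z = m-1 := by omega
    omega
  · intro z hz; obtain rfl : z = m-1 := by omega
    omega

theorem l_last (P : Polyomino m k) (hm : 1 ≤ m) (hk : 1 ≤ k) : colHeight P.lower (m-1) < k := by
  by_contra hne
  have := P.above (m-1) (by omega)
  have h2 := u_last P hm hk
  refine not_both P (m-1) k (by omega) (by omega) (by omega) (by omega) ?_ (by omega) ?_ (by omega)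
  · intro z hz
    exact u_le P z (by omega)
  · intro z hz
    exact (P.above z (by omega)).trans (u_le P z (by omega))

theorem overlap (P : Polyomino m k) (i : ℕ) (hi : i + 1 < m) :
    colHeight P.lower (i+1) < colHeight P.upper i := by
  by_contra hne
  have := P.above i (by omega)
  refine not_both P (i+1) (colHeight P.upper i) (by omega) (u_le P i (by omega)) (by omega)
    (by omega) ?_ ?_ ?_ (by omega)
  · intro z hz; obtain rfl : z = i := by omega
    omega
  · intro _; exact ch_mono P.upper (by omega) (by rw [P.upperE]; omega)
  · intro z hz; obtain rfl : z = i := by omega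
    omega

theorem eFloor_spec (P : Polyomino m k) (hm : 1 ≤ m) (hk : 1 ≤ k) (j i : ℕ) :
    eFloor P j < m ∧ (i < m → (i ≤ eFloor P j ↔ colHeight P.lower i ≤ j)) := by
  have hne : ((List.range m).filter (fun i => decide (colHeight P.lower i ≤ j))) ≠ [] := by
    apply List.ne_nil_of_mem (a := 0)
    simp [l_zero P hm hk]; omega
  have e1 : eFloor P j = ((List.range m).filter
      (fun i => decide (colHeight P.lower i ≤ j))).getLast hne := by
    rw [eFloor, List.getLastD_eq_getLast?, List.getLast?_eq_getLast_of_ne_nil hne]; rfl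
  have hmem := List.getLast_mem hne
  rw [← e1] at hmem
  simp at hmem
  refine ⟨hmem.1, fun hi => ⟨fun h => ?_, fun h => ?_⟩⟩
  · exact (ch_mono P.lower h (by rw [P.lowerE]; exact hmem.1)).trans hmem.2
  · have hs : ((List.range m).filter
      (fun i => decide (colHeight P.lower i ≤ j))).Pairwise (· ≤ ·) :=
      (List.pairwise_le_range (n := m)).filter _
    have hi' : i ∈ ((List.range m).filter (fun i => decide (colHeight P.lower i ≤ j))) := by
      simp [hi, h]
    rw [e1]
    exact hs.rel_getLast hi'

theorem fCeil_spec (P : Polyomino m k) (hm : 1 ≤ m) (hk : 1 ≤ k) (j i : ℕ) (hj : j < k) :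
    fCeil P j < m ∧ (i < m → (fCeil P j ≤ i ↔ j + 1 ≤ colHeight P.upper i)) := by
  have hne : ((List.range m).filter (fun i => decide (j + 1 ≤ colHeight P.upper i))) ≠ [] := by
    apply List.ne_nil_of_mem (a := m-1)
    simp [u_last P hm hk]; omega
  have e1 : fCeil P j = ((List.range m).filter
      (fun i => decide (j + 1 ≤ colHeight P.upper i))).head hne := by
    rw [fCeil, List.headD_eq_head?_getD, List.head?_eq_some_head hne]; rfl
  have hmem := List.head_mem hne
  rw [← e1] at hmem
  simp at hmem
  refine ⟨hmem.1, fun hi => ⟨fun h => ?_, fun h => ?_⟩⟩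
  · have := (ch_mono P.upper h (by rw [P.upperE]; exact hi))
    omega
  · have hs : ((List.range m).filter
      (fun i => decide (j + 1 ≤ colHeight P.upper i))).Pairwise (· ≤ ·) :=
      (List.pairwise_le_range (n := m)).filter _
    have hi' : i ∈ ((List.range m).filter (fun i => decide (j + 1 ≤ colHeight P.upper i))) := by
      simp [hi]; omega
    rw [e1]
    exact hs.rel_head hi'

theorem fCeil_zero (P : Polyomino m k) (hm : 1 ≤ m) (hk : 1 ≤ k) : fCeil P 0 = 0 := by
  have := ((fCeil_spec P hm hk 0 0 hk).2 hm).2 (u_zero P hm hk)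
  omega

theorem fCeil_last (P : Polyomino m k) : fCeil P k = m - 1 := by
  have : ((List.range m).filter (fun i => decide (k + 1 ≤ colHeight P.upper i))) = [] := by
    simp
    intro i hi
    have := u_le P i hi
    omega
  rw [fCeil, this]; rfl

theorem fCeil_mono (P : Polyomino m k) (hm : 1 ≤ m) (hk : 1 ≤ k) (j : ℕ) (hj : j < k) :
    fCeil P j ≤ fCeil P (j+1) := by
  by_cases h : j + 1 < k
  · have a := fCeil_spec P hm hk (j+1) (fCeil P (j+1)) h
    have b := a.2 a.1
    have c := (fCeil_spec P hm hk j (fCeil P (j+1)) hj).2 a.1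
    rw [c]
    have := b.1 le_rfl
    omega
  · obtain rfl : k = j + 1 := by omega
    rw [fCeil_last]
    have := (fCeil_spec P hm hk j 0 hj).1
    omega

theorem eFloor_mono (P : Polyomino m k) (hm : 1 ≤ m) (hk : 1 ≤ k) (j : ℕ) :
    eFloor P j ≤ eFloor P (j+1) := by
  have a := eFloor_spec P hm hk j (eFloor P j)
  have b := (a.2 a.1).1 le_rfl
  exact ((eFloor_spec P hm hk (j+1) (eFloor P j)).2 a.1).2 (by omega)

theorem eFloor_last (P : Polyomino m k) (hm : 1 ≤ m) (hk : 1 ≤ k) :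
    eFloor P (k-1) = m - 1 := by
  have := l_last P hm hk
  have a := eFloor_spec P hm hk (k-1) (m-1)
  have b := (a.2 (by omega)).2 (by omega)
  omega

theorem f_le_e (P : Polyomino m k) (hm : 1 ≤ m) (hk : 1 ≤ k) (j : ℕ) (hj : j < k) :
    fCeil P (j+1) ≤ eFloor P j := by
  by_cases h : j + 1 < k
  · have a := (fCeil_spec P hm hk (j+1) 0 h).1
    rcases Nat.eq_zero_or_pos (fCeil P (j+1)) with h0 | h0
    · omega
    · rw [(eFloor_spec P hm hk j _).2 a]
      have b := (fCeil_spec P hm hk (j+1) (fCeil P (j+1) - 1) h).2 (by omega)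
      have c := overlap P (fCeil P (j+1) - 1) (by omega)
      rw [Nat.sub_add_cancel h0] at c
      have : ¬ (j + 1 + 1 ≤ colHeight P.upper (fCeil P (j+1) - 1)) := by
        rw [← b]; omega
      omega
  · obtain rfl : k = j + 1 := by omega
    have := eFloor_last P hm hk
    rw [fCeil_last]
    simp at this
    omega

theorem cells (P : Polyomino m k) (hm : 1 ≤ m) (hk : 1 ≤ k) :
    ∑ i ∈ Finset.range m, (colHeight P.upper i - colHeight P.lower i)
      = ∑ j ∈ Finset.range k, (eFloor P j + 1 - fCeil P j) := by
  have h1 : ∀ i ∈ Finset.range m, colHeight P.upper i - colHeight P.lower i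
      = ∑ j ∈ Finset.range k,
        if colHeight P.lower i ≤ j ∧ j + 1 ≤ colHeight P.upper i then 1 else 0 := by
    intro i hi
    rw [Finset.mem_range] at hi
    rw [← Finset.card_filter, ← Nat.card_Ico]
    congr 1
    ext j
    have := u_le P i hi
    simp
    omega
  rw [Finset.sum_congr rfl h1, Finset.sum_comm]
  apply Finset.sum_congr rfl
  intro j hj
  rw [Finset.mem_range] at hj
  rw [← Finset.card_filter, ← Nat.card_Icc]
  congr 1
  ext i
  simp only [Finset.mem_filter, Finset.mem_range, Finset.mem_Icc]
  have a := eFloor_spec P hm hk j i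
  have b := fCeil_spec P hm hk j i hj
  constructor
  · rintro ⟨hi, h1, h2⟩
    exact ⟨(b.2 hi).2 h2, (a.2 hi).2 h1⟩
  · rintro ⟨h1, h2⟩
    have hi : i < m := by omega
    exact ⟨hi, (a.2 hi).1 h2, (b.2 hi).1 h1⟩

end poly

theorem fmax_mem {s : Finset ℕ} (h : s.Nonempty) : fmax s ∈ s := by
  obtain ⟨x, hx, hx'⟩ := Finset.exists_mem_eq_sup s h id
  rw [fmax, hx']; exact hx

theorem le_fmax {s : Finset ℕ} {x : ℕ} (h : x ∈ s) : x ≤ fmax s :=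
  Finset.le_sup (f := id) h

theorem fmax_eq {s : Finset ℕ} {x : ℕ} (h : x ∈ s) (h' : ∀ y ∈ s, y ≤ x) : fmax s = x :=
  le_antisymm (Finset.sup_le h') (le_fmax h)

theorem pickRow_spec (cnt L : ℕ) : ∀ used : Finset ℕ, cnt ≤ (Finset.Icc 1 L \ used).card →
    pickRow cnt L used ⊆ Finset.Icc 1 L \ used ∧ (pickRow cnt L used).card = cnt := by
  induction cnt with
  | zero => intro used _; simp [pickRow]
  | succ c ih =>
    intro used h
    have hne : (Finset.Icc 1 L \ used).Nonempty := by
      rw [← Finset.card_pos]; omega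
    have hx := fmax_mem hne
    have he : Finset.Icc 1 L \ insert (fmax (Finset.Icc 1 L \ used)) used
        = (Finset.Icc 1 L \ used).erase (fmax (Finset.Icc 1 L \ used)) := by
      ext z; simp only [Finset.mem_sdiff, Finset.mem_insert, Finset.mem_erase]; tauto
    obtain ⟨h1, h2⟩ := ih (insert (fmax (Finset.Icc 1 L \ used)) used) (by
      rw [he, Finset.card_erase_of_mem hx]; omega)
    rw [he] at h1
    simp only [pickRow]
    constructor
    · intro z hz
      rcases Finset.mem_insert.1 hz with rfl | hz
      · exact hx
      · exact (Finset.mem_erase.1 (h1 hz)).2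
    · rw [Finset.card_insert_of_notMem, h2]
      intro hz
      exact (Finset.mem_erase.1 (h1 hz)).1 rfl

theorem pickRow_top (cnt L : ℕ) (used : Finset ℕ) (hL : 1 ≤ L) (h : L ∉ used) :
    L ∈ pickRow (cnt + 1) L used := by
  have : fmax (Finset.Icc 1 L \ used) = L := by
    apply fmax_eq
    · simp [hL, h]
    · intro y hy; simp at hy; omega
  simp [pickRow, this]

/-- labels used before row `j` -/
def usedSet {m k : ℕ} (P : Polyomino m k) : ℕ → Finset ℕ
  | 0 => ∅
  | j + 1 => usedSet P j ∪ pickRow (rowCount P j) (eFloor P j + j + 1) (usedSet P j)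

/-- block of row `j` -/
def rowBlock {m k : ℕ} (P : Polyomino m k) (j : ℕ) : Finset ℕ :=
  pickRow (rowCount P j) (eFloor P j + j + 1) (usedSet P j)

theorem fold_eq {m k : ℕ} (P : Polyomino m k) (t : ℕ) :
    ((List.range t).foldl
      (fun st j =>
        let B := pickRow (rowCount P j) (eFloor P j + j + 1) st.1
        (st.1 ∪ B, B :: st.2))
      ((∅ : Finset ℕ), ([] : List (Finset ℕ)))) =
    (usedSet P t, ((List.range t).map (rowBlock P)).reverse) := by
  induction t with
  | zero => simp [usedSet]
  | succ t ih =>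
    rw [List.range_succ, List.foldl_append, ih]
    simp [usedSet, rowBlock]

theorem etaBlocks_eq {m k : ℕ} (P : Polyomino m k) :
    etaBlocks P = (Finset.range k).image (rowBlock P) := by
  rw [etaBlocks, fold_eq]
  ext b
  simp

section main
variable {m k : ℕ}

theorem used_spec (P : Polyomino m k) (hm : 1 ≤ m) (hk : 1 ≤ k) (j : ℕ) (hj : j ≤ k) :
    (usedSet P j).card = fCeil P j + j ∧
      (∀ x ∈ usedSet P j, 1 ≤ x ∧ x < eFloor P j + j + 1) ∧
      (∀ i, i + 1 = j → usedSet P j ⊆ Finset.Icc 1 (eFloor P i + i + 1)) := by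
  induction j with
  | zero => simp [usedSet, fCeil_zero P hm hk]
  | succ j ih =>
    obtain ⟨h1, h2, -⟩ := ih (by omega)
    have hsub : usedSet P j ⊆ Finset.Icc 1 (eFloor P j + j + 1) := by
      intro x hx; have := h2 x hx; simp; omega
    have hfe := f_le_e P hm hk j (by omega)
    have hfm := fCeil_mono P hm hk j (by omega)
    have hem := eFloor_mono P hm hk j
    obtain ⟨p1, p2⟩ := pickRow_spec (rowCount P j) (eFloor P j + j + 1) (usedSet P j) (by
      rw [Finset.card_sdiff_of_subset hsub, h1, Nat.card_Icc, rowCount]; omega)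
    have hsub' : usedSet P (j+1) ⊆ Finset.Icc 1 (eFloor P j + j + 1) :=
      Finset.union_subset hsub (p1.trans Finset.sdiff_subset)
    refine ⟨?_, ?_, ?_⟩
    · rw [usedSet, Finset.card_union_of_disjoint, h1, p2, rowCount]
      · omega
      · exact (Finset.disjoint_sdiff).mono_right p1
    · intro x hx
      have := hsub' hx
      simp at this
      omega
    · intro i hi
      obtain rfl : i = j := by omega
      exact hsub'

theorem block_spec (P : Polyomino m k) (hm : 1 ≤ m) (hk : 1 ≤ k) (j : ℕ) (hj : j < k) :
    rowBlock P j ⊆ Finset.Icc 1 (eFloor P j + j + 1) \ usedSet P j ∧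
    fmax (rowBlock P j) = eFloor P j + j + 1 ∧ eFloor P j + j + 1 ∈ rowBlock P j := by
  obtain ⟨h1, h2, -⟩ := used_spec P hm hk j (by omega)
  have hsub : usedSet P j ⊆ Finset.Icc 1 (eFloor P j + j + 1) := by
    intro x hx; have := h2 x hx; simp; omega
  have hfe := f_le_e P hm hk j (by omega)
  have hfm := fCeil_mono P hm hk j (by omega)
  obtain ⟨p1, p2⟩ := pickRow_spec (rowCount P j) (eFloor P j + j + 1) (usedSet P j) (by
      rw [Finset.card_sdiff_of_subset hsub, h1, Nat.card_Icc, rowCount]; omega)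
  have htop : eFloor P j + j + 1 ∈ rowBlock P j := by
    rw [rowBlock, rowCount]
    apply pickRow_top _ _ _ (by omega)
    intro h
    have := h2 _ h
    omega
  refine ⟨p1, fmax_eq htop ?_, htop⟩
  intro y hy
  have := p1 hy
  simp at this
  omega

theorem mem_used (P : Polyomino m k) (j x : ℕ) :
    x ∈ usedSet P j ↔ ∃ i < j, x ∈ rowBlock P i := by
  induction j with
  | zero => simp [usedSet]
  | succ j ih =>
    rw [usedSet, Finset.mem_union, ih]
    constructor
    · rintro (⟨i, hi, h⟩ | h)
      · exact ⟨i, by omega, h⟩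
      · exact ⟨j, by omega, h⟩
    · rintro ⟨i, hi, h⟩
      rcases Nat.lt_succ_iff_lt_or_eq.1 hi with hi | rfl
      · exact Or.inl ⟨i, hi, h⟩
      · exact Or.inr h

theorem L_lt (P : Polyomino m k) (hm : 1 ≤ m) (hk : 1 ≤ k) {i j : ℕ} (h : i < j) :
    eFloor P i + i + 1 < eFloor P j + j + 1 := by
  have := monotone_nat_of_le_succ (eFloor_mono P hm hk) h.le
  omega

theorem used_full (P : Polyomino m k) (hm : 1 ≤ m) (hk : 1 ≤ k) :
    usedSet P k = Finset.Icc 1 (m + k - 1) := by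
  obtain ⟨h1, -, h3⟩ := used_spec P hm hk k le_rfl
  have h3 := h3 (k-1) (by omega)
  rw [eFloor_last P hm hk, show m - 1 + (k-1) + 1 = m + k - 1 by omega] at h3
  apply Finset.eq_of_subset_of_card_le h3
  rw [h1, fCeil_last, Nat.card_Icc]
  omega

theorem block_disj (P : Polyomino m k) (hm : 1 ≤ m) (hk : 1 ≤ k) {i j x : ℕ} (hi : i < k)
    (hj : j < k) (hxi : x ∈ rowBlock P i) (hxj : x ∈ rowBlock P j) : i = j := by
  rcases lt_trichotomy i j with h | h | h
  · have := (block_spec P hm hk j hj).1 hxj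
    exact absurd ((mem_used P j x).2 ⟨i, h, hxi⟩) (Finset.mem_sdiff.1 this).2
  · exact h
  · have := (block_spec P hm hk i hi).1 hxi
    exact absurd ((mem_used P i x).2 ⟨j, h, hxj⟩) (Finset.mem_sdiff.1 this).2

theorem ncArea_eq (P : Polyomino m k) (hm : 1 ≤ m) (hk : 1 ≤ k) :
    ncArea (etaBlocks P) = ∑ i ∈ Finset.range k, (eFloor P i - fCeil P (i+1)) := by
  have hinj : Set.InjOn (rowBlock P) (Finset.range k : Set ℕ) := by
    intro i hi j hj h
    simp at hi hj
    have a := (block_spec P hm hk i hi).2.2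
    have b := a
    rw [h] at b
    exact block_disj P hm hk hi hj a b
  rw [ncArea, etaBlocks_eq, Finset.sum_image hinj]
  apply Finset.sum_congr rfl
  intro i hi
  rw [Finset.sum_image hinj, ← Finset.card_biUnion]
  swap
  · intro a ha b hb hab
    replace ha : a < k := Finset.mem_range.1 (Finset.mem_coe.1 ha)
    replace hb : b < k := Finset.mem_range.1 (Finset.mem_coe.1 hb)
    apply Finset.disjoint_left.2
    intro x hxa hxb
    exact hab (block_disj P hm hk ha hb (Finset.mem_filter.1 hxa).1 (Finset.mem_filter.1 hxb).1)
  rw [Finset.mem_range] at hi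
  obtain ⟨h1, -, h3⟩ := used_spec P hm hk (i+1) hi
  have h3 := h3 i rfl
  have key : (Finset.range k).biUnion (fun j => (rowBlock P j).filter
      (fun x => x < fmax (rowBlock P i) ∧ fmax (rowBlock P i) < fmax (rowBlock P j)))
      = Finset.Icc 1 (eFloor P i + i + 1) \ usedSet P (i+1) := by
    obtain ⟨b1, b2, b3⟩ := block_spec P hm hk i hi
    ext x
    simp only [Finset.mem_biUnion, Finset.mem_range, Finset.mem_filter, Finset.mem_sdiff]
    constructor
    · rintro ⟨j, hj, hx, hx1, hx2⟩
      obtain ⟨c1, c2, c3⟩ := block_spec P hm hk j hj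
      rw [b2] at hx1 hx2
      rw [c2] at hx2
      have hij : i < j := by
        by_contra hn
        rcases (Nat.lt_or_ge j i) with h | h
        · have := L_lt P hm hk h; omega
        · obtain rfl : i = j := by omega
          omega
      have hx' := c1 hx
      simp at hx'
      refine ⟨by simp; omega, ?_⟩
      rw [mem_used]
      rintro ⟨t, ht, hxt⟩
      have := block_disj P hm hk (by omega) hj hxt hx
      omega
    · rintro ⟨hx, hxu⟩
      have hL : eFloor P i + i + 1 ≤ m + k - 1 := by
        have := (eFloor_spec P hm hk i 0).1
        omega
      have hxk : x ∈ usedSet P k := by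
        rw [used_full P hm hk]; simp at hx ⊢; omega
      obtain ⟨j, hj, hxj⟩ := (mem_used P k x).1 hxk
      have hij : i < j := by
        by_contra hn
        exact hxu ((mem_used P (i+1) x).2 ⟨j, by omega, hxj⟩)
      have hne : x ≠ eFloor P i + i + 1 := by
        rintro rfl
        exact hxu ((mem_used P (i+1) _).2 ⟨i, by omega, b3⟩)
      refine ⟨j, hj, hxj, ?_, ?_⟩
      · rw [b2]; simp at hx; omega
      · rw [b2, (block_spec P hm hk j hj).2.1]; exact L_lt P hm hk hij
  rw [key, Finset.card_sdiff_of_subset h3, h1, Nat.card_Icc]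
  omega

theorem area_main_s14 (P : Polyomino m k) (hm : 1 ≤ m) (hk : 1 ≤ k) :
    area P = ncArea (etaBlocks P) := by
  rw [ncArea_eq P hm hk, area, cells P hm hk]
  have key : ∀ t ≤ k, ∑ j ∈ Finset.range t, (eFloor P j + 1 - fCeil P j)
      = ∑ i ∈ Finset.range t, (eFloor P i - fCeil P (i+1)) + fCeil P t + t := by
    intro t
    induction t with
    | zero => intro _; simp [fCeil_zero P hm hk]
    | succ t ih =>
      intro ht
      rw [Finset.sum_range_succ, Finset.sum_range_succ, ih (by omega)]
      have hfe := f_le_e P hm hk t (by omega)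
      have hfm := fCeil_mono P hm hk t (by omega)
      omega
  rw [key k le_rfl, fCeil_last]
  omega

end main

/-- For all `n ≥ k ≥ 1` and every `P ∈ PP(n-k+1, k)`, the area of `P` equals the area
of the noncrossing partition `η(P)`, i.e.
`area P = ∑_{β,β' ∈ η(P)} #{ i ∈ β' : i < max β < max β' }`. -/
theorem area_eta (n k : ℕ) (hk : 1 ≤ k) (hkn : k ≤ n) (P : Polyomino (n - k + 1) k) :
    area P = ncArea (etaBlocks P) :=
  area_main_s14 P (by omega) hk

end QtN
end
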